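/- arXiv:2510.24101 — 2 statements merged into one kernel-verified Lean document; each statement's English description precedes it below -/
import Mathlib

section
/- Let q be a prime with q ≥ (4B+1)², m ≥ 3n, and B = poly(n). Let x, x' be independent uniform elements of ℤ_q^n and M uniform in ℤ_q^{m×n}, all independent. Then the probability that x ≠ x' and there exists t ∈ ℤ_q^m with ‖t - M·x mod q‖_∞ ≤ B and ‖t - M·x' mod q‖_∞ ≤ B is at most q^{-n} + Pr[x = x'], which is negligible in n. -/
/-- The centered representative of `x : ZMod q`, lying in `(-q/2, q/2]`. -/
def ZModCtr (q : ℕ) (x : ZMod q) : ℤ :=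
  if 2 * x.val ≤ q then (x.val : ℤ) else (x.val : ℤ) - q

/-- The `ℓ∞`-norm of a vector over `ZMod q`, with entries represented in
    `(-q/2, q/2]`. -/
def infNormMod {q m : ℕ} (u : Fin m → ZMod q) : ℕ :=
  Finset.univ.sup fun i => (ZModCtr q (u i)).natAbs

theorem ctr_cast (q : ℕ) [NeZero q] (x : ZMod q) : ((ZModCtr q x : ℤ) : ZMod q) = x := by
  unfold ZModCtr
  split_ifs <;> simp

theorem row_bound (q n : ℕ) [NeZero q] (hq : q.Prime) (S : Finset (ZMod q))
    (s : Fin n → ZMod q) (hs : s ≠ 0) :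
    (Finset.univ.filter fun r : Fin n → ZMod q => r ⬝ᵥ s ∈ S).card * q ≤ S.card * q ^ n := by
  have : Fact q.Prime := ⟨hq⟩
  obtain ⟨j, hj⟩ := Function.ne_iff.mp hs
  have h := Finset.card_le_card_of_injOn
    (s := (Finset.univ.filter fun r : Fin n → ZMod q => r ⬝ᵥ s ∈ S) ×ˢ
      (Finset.univ : Finset (ZMod q)))
    (t := S ×ˢ (Finset.univ : Finset (Fin n → ZMod q)))
    (fun p => (p.1 ⬝ᵥ s, Function.update p.1 j p.2))
    (by
      intro p hp
      simpa using hp)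
    (by
      rintro ⟨r, a⟩ _ ⟨r', a'⟩ _ h
      simp only [Prod.mk.injEq] at h
      obtain ⟨h1, h2⟩ := h
      have ha : a = a' := by simpa using congrFun h2 j
      have hoff : ∀ i, i ≠ j → r i = r' i := by
        intro i hi
        simpa [hi] using congrFun h2 i
      have hjj : r j = r' j := by
        unfold dotProduct at h1
        rw [← Finset.add_sum_erase _ _ (Finset.mem_univ j),
          ← Finset.add_sum_erase _ (fun i => r' i * s i) (Finset.mem_univ j)] at h1
        have : ∑ i ∈ Finset.univ.erase j, r i * s i = ∑ i ∈ Finset.univ.erase j, r' i * s i :=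
          Finset.sum_congr rfl fun i hi => by rw [hoff i (Finset.ne_of_mem_erase hi)]
        rw [this] at h1
        exact mul_right_cancel₀ hj (add_right_cancel h1)
      have : r = r' := by
        funext i
        by_cases hi : i = j
        · rw [hi, hjj]
        · exact hoff i hi
      rw [this, ha])
  simpa [Finset.card_product, ZMod.card] using h

theorem mat_bound (q n m B : ℕ) [NeZero q] (hq : q.Prime)
    (hqB : (4 * B + 1) ^ 2 ≤ q) (hm : 3 * n ≤ m) (S : Finset (ZMod q))
    (hS : S.card ≤ 4 * B + 1) (s : Fin n → ZMod q) (hs : s ≠ 0) :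
    (Finset.univ.filter fun M : Matrix (Fin m) (Fin n) (ZMod q) =>
      ∀ i, M.mulVec s i ∈ S).card * q ^ n ≤ q ^ (n * m) := by
  have hc : (Finset.univ.filter fun M : Matrix (Fin m) (Fin n) (ZMod q) =>
      ∀ i, M.mulVec s i ∈ S).card ≤
      (Finset.univ.filter fun r : Fin n → ZMod q => r ⬝ᵥ s ∈ S).card ^ m := by
    have := Fintype.card_piFinset_const
      (Finset.univ.filter fun r : Fin n → ZMod q => r ⬝ᵥ s ∈ S) m
    rw [← this]
    refine Finset.card_le_card_of_injOn (fun M i => M i) ?_ ?_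
    · intro M hM
      have hM' := (Finset.mem_filter.mp hM).2
      simp only [Finset.mem_coe, Fintype.mem_piFinset, Finset.mem_filter, Finset.mem_univ, true_and]
      exact hM'
    · intro M _ M' _ h
      exact h
  set R := (Finset.univ.filter fun r : Fin n → ZMod q => r ⬝ᵥ s ∈ S).card
  have hr : R * q ≤ S.card * q ^ n := row_bound q n hq S s hs
  have hqp : 0 < q := hq.pos
  have h1 : (4 * B + 1) ^ m * q ^ n ≤ q ^ m := by
    refine (Nat.pow_le_pow_iff_left (n := 2) (by norm_num)).mp ?_
    calc ((4 * B + 1) ^ m * q ^ n) ^ 2 = ((4 * B + 1) ^ 2) ^ m * q ^ (2 * n) := by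
          generalize 4 * B + 1 = c
          ring
      _ ≤ q ^ m * q ^ m := Nat.mul_le_mul (Nat.pow_le_pow_left hqB m)
          (Nat.pow_le_pow_right hqp (by omega))
      _ = (q ^ m) ^ 2 := by ring
  refine le_trans (Nat.mul_le_mul_right _ hc) ?_
  refine Nat.le_of_mul_le_mul_right ?_ (pow_pos hqp m)
  calc R ^ m * q ^ n * q ^ m = (R * q) ^ m * q ^ n := by ring
    _ ≤ ((4 * B + 1) * q ^ n) ^ m * q ^ n :=
        Nat.mul_le_mul_right _ (Nat.pow_le_pow_left
          (hr.trans (Nat.mul_le_mul_right _ hS)) m)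
    _ = ((4 * B + 1) ^ m * q ^ n) * q ^ (n * m) := by rw [mul_pow, ← pow_mul]; ring
    _ ≤ q ^ m * q ^ (n * m) := Nat.mul_le_mul_right _ h1
    _ = _ := by ring

open Classical in
/-- Trace-correctness: for independent uniform `x, x'` and uniform `M`, the
    probability that `x ≠ x'` and some tag `t` is traced by both (i.e. within
    distance `B` of both `M·x` and `M·x'`) is at most `q^{-n} + Pr[x = x']`.
    (Probabilities are expressed by counting: multiply through by
    `q^n · |Ω|⁻¹`.) -/
theorem trace_correctness_bound (q n m B : ℕ) [NeZero q] (hq : q.Prime)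
    (hqB : (4 * B + 1) ^ 2 ≤ q) (hm : 3 * n ≤ m) :
    (Finset.univ.filter fun ω : (Fin n → ZMod q) × (Fin n → ZMod q) ×
          Matrix (Fin m) (Fin n) (ZMod q) =>
        ω.1 ≠ ω.2.1 ∧ ∃ t : Fin m → ZMod q,
          infNormMod (fun i => t i - ω.2.2.mulVec ω.1 i) ≤ B ∧
          infNormMod (fun i => t i - ω.2.2.mulVec ω.2.1 i) ≤ B).card * q ^ n ≤
      Fintype.card ((Fin n → ZMod q) × (Fin n → ZMod q) ×
          Matrix (Fin m) (Fin n) (ZMod q)) +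
        (Finset.univ.filter fun ω : (Fin n → ZMod q) × (Fin n → ZMod q) ×
            Matrix (Fin m) (Fin n) (ZMod q) => ω.1 = ω.2.1).card * q ^ n := by
  refine le_trans ?_ (Nat.le_add_right _ _)
  let S : Finset (ZMod q) := (Finset.Icc (-(2 * B : ℤ)) (2 * B)).image (fun k : ℤ => (k : ZMod q))
  have hS : S.card ≤ 4 * B + 1 := by
    refine Finset.card_image_le.trans ?_
    rw [Int.card_Icc]
    omega
  have hle : ∀ {u : Fin m → ZMod q}, infNormMod u ≤ B → ∀ i, (ZModCtr q (u i)).natAbs ≤ B := by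
    intro u hu i
    exact (Finset.le_sup (f := fun i => (ZModCtr q (u i)).natAbs) (Finset.mem_univ i)).trans hu
  have key : ∀ (x x' : Fin n → ZMod q), (Finset.univ.filter
      fun M : Matrix (Fin m) (Fin n) (ZMod q) => x ≠ x' ∧ ∃ t : Fin m → ZMod q,
          infNormMod (fun i => t i - M.mulVec x i) ≤ B ∧
          infNormMod (fun i => t i - M.mulVec x' i) ≤ B).card * q ^ n ≤ q ^ (n * m) := by
    intro x x'
    by_cases hx : x = x'
    · simp [hx]
    refine le_trans (Nat.mul_le_mul_right _ (Finset.card_le_card ?_))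
      (mat_bound q n m B hq hqB hm S hS (x' - x) (sub_ne_zero.mpr (Ne.symm hx)))
    intro M hM
    simp only [Finset.mem_filter, Finset.mem_univ, true_and] at hM ⊢
    obtain ⟨_, t, h1, h2⟩ := hM
    intro i
    have a1 := hle h1 i
    have a2 := hle h2 i
    refine Finset.mem_image.mpr ⟨ZModCtr q (t i - M.mulVec x i) - ZModCtr q (t i - M.mulVec x' i),
      Finset.mem_Icc.mpr ⟨by omega, by omega⟩, ?_⟩
    rw [Int.cast_sub, ctr_cast, ctr_cast, Matrix.mulVec_sub, Pi.sub_apply]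
    ring
  rw [Finset.card_filter, Fintype.sum_prod_type, Finset.sum_mul]
  simp_rw [Fintype.sum_prod_type, ← Finset.card_filter, Finset.sum_mul]
  refine (Finset.sum_le_sum fun x _ => Finset.sum_le_sum fun x' _ => key x x').trans ?_
  have hM : Fintype.card (Matrix (Fin m) (Fin n) (ZMod q)) = q ^ (n * m) := by
    have : Fintype.card (Fin m → Fin n → ZMod q) = q ^ (n * m) := by
      simp [ZMod.card, pow_mul]
    rw [← this]
    exact Fintype.card_congr (Equiv.refl _)
  rw [Fintype.card_prod, Fintype.card_prod, hM]
  simp [Finset.card_univ, mul_assoc]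
end

section
/- Let q be prime, S ∈ ℤ^{m×m} a matrix whose columns are ℝ-linearly independent, and e, e' ∈ ℤ^m with ‖e‖_∞, ‖e'‖_∞ ≤ B where ‖S‖₂ · √m · B < q/2. If Sᵀ·e ≡ Sᵀ·e' (mod q), then e = e'. -/
open scoped BigOperators

/-- If the columns of `S` are ℝ-linearly independent, `‖e‖_∞, ‖e'‖_∞ ≤ B` with
    `‖S‖₂·√m·B < q/2` (`‖S‖₂` the maximum column norm), and
    `Sᵀe ≡ Sᵀe' (mod q)`, then `e = e'`. -/
theorem small_solution_unique (q m : ℕ) (hq : q.Prime) (hm : 0 < m)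
    (S : Matrix (Fin m) (Fin m) ℤ)
    (hlin : LinearIndependent ℝ fun j : Fin m => fun i : Fin m => ((S i j : ℤ) : ℝ))
    (e e' : Fin m → ℤ) (B : ℤ)
    (he : ∀ i, |e i| ≤ B) (he' : ∀ i, |e' i| ≤ B)
    (hnorm : (Finset.univ.sup' ⟨⟨0, hm⟩, Finset.mem_univ _⟩
          fun j => Real.sqrt (∑ i, ((S i j : ℤ) : ℝ) ^ 2)) *
        Real.sqrt m * (B : ℝ) < (q : ℝ) / 2)
    (hcong : ∀ i, (q : ℤ) ∣ (S.transpose.mulVec e i - S.transpose.mulVec e' i)) :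
    e = e' := by 
  have hB : (0 : ℝ) ≤ (B : ℝ) := by
    exact_mod_cast (abs_nonneg _).trans (he ⟨0, hm⟩)
  have hd : ∀ i, |((e i : ℝ) - (e' i : ℝ))| ≤ 2 * (B : ℝ) := by
    intro i
    have h1 : |(e i : ℝ)| ≤ B := by exact_mod_cast he i
    have h2 : |(e' i : ℝ)| ≤ B := by exact_mod_cast he' i
    have := abs_sub (e i : ℝ) (e' i : ℝ)
    linarith
  have hzero : ∀ j, S.transpose.mulVec (e - e') j = 0 := by
    intro j
    have hdvd : (q : ℤ) ∣ S.transpose.mulVec (e - e') j := by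
      rw [Matrix.mulVec_sub]
      exact hcong j
    refine Int.eq_zero_of_abs_lt_dvd hdvd ?_
    have hcast : ((S.transpose.mulVec (e - e') j : ℤ) : ℝ)
        = ∑ i, (S i j : ℝ) * ((e i : ℝ) - (e' i : ℝ)) := by
      simp [Matrix.mulVec, dotProduct]
    have hcs := Finset.sum_mul_sq_le_sq_mul_sq Finset.univ (fun i => (S i j : ℝ))
      (fun i => (e i : ℝ) - (e' i : ℝ))
    have hsum : ∑ i, ((e i : ℝ) - (e' i : ℝ)) ^ 2 ≤ m * (2 * (B : ℝ)) ^ 2 := by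
      calc _ ≤ ∑ _i : Fin m, (2 * (B : ℝ)) ^ 2 :=
            Finset.sum_le_sum fun i _ => sq_le_sq' (abs_le.1 (hd i)).1 (abs_le.1 (hd i)).2
        _ = _ := by simp
    have hS : (0 : ℝ) ≤ ∑ i, (S i j : ℝ) ^ 2 := Finset.sum_nonneg fun i _ => sq_nonneg _
    have hle : |∑ i, (S i j : ℝ) * ((e i : ℝ) - (e' i : ℝ))|
        ≤ Real.sqrt (∑ i, (S i j : ℝ) ^ 2) * Real.sqrt m * (2 * B) := by
      apply abs_le_of_sq_le_sq _ (by positivity)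
      rw [mul_pow, mul_pow, Real.sq_sqrt hS, Real.sq_sqrt (Nat.cast_nonneg m), mul_assoc]
      exact hcs.trans (mul_le_mul_of_nonneg_left hsum hS)
    have hsup := Finset.le_sup' (fun j => Real.sqrt (∑ i, ((S i j : ℤ) : ℝ) ^ 2))
      (Finset.mem_univ j)
    have h3 := mul_le_mul_of_nonneg_right (mul_le_mul_of_nonneg_right hsup
      (Real.sqrt_nonneg (m : ℝ))) hB
    have : |((S.transpose.mulVec (e - e') j : ℤ) : ℝ)| < (q : ℝ) := by
      rw [hcast]
      linarith
    exact_mod_cast this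
  have hU : IsUnit (S.map (Int.cast : ℤ → ℝ)) :=
    Matrix.linearIndependent_cols_iff_isUnit.1 hlin
  have hdet : S.transpose.det ≠ 0 := by
    intro h
    rw [Matrix.det_transpose] at h
    have h2 := ((Matrix.isUnit_iff_isUnit_det _).1 hU).ne_zero
    apply h2
    have h3 := (Int.castRingHom ℝ).map_det S
    rw [h] at h3
    simpa using h3.symm
  exact sub_eq_zero.1 (Matrix.eq_zero_of_mulVec_eq_zero hdet (funext hzero))
end
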